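/- Let A be the ring of integers of a number field K. Let G = ⟨σ⟩ be a finite cyclic subgroup of GL_2(A) acting linearly on R = A[X,Y] (fixing A). Let ε_1, ε_2 be the eigenvalues of σ (in an algebraic closure of K). If ε_1 = ε_2, then the ring of invariants R^G is Cohen-Macaulay. -/

import Mathlib

/-- A Noetherian local ring is Cohen–Macaulay if it admits a regular sequence, consisting of
elements of the maximal ideal, whose length equals the Krull dimension of the ring. -/
def IsCohenMacaulayLocalRing (R : Type*) [CommRing R] [IsLocalRing R] : Prop :=
  ∃ (n : ℕ) (rs : List R), ringKrullDim R = n ∧ rs.length = n ∧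
    (∀ x ∈ rs, x ∈ IsLocalRing.maximalIdeal R) ∧ RingTheory.Sequence.IsRegular R rs

/-- A Noetherian ring is Cohen–Macaulay if all its localizations at prime ideals are
Cohen–Macaulay local rings. -/
def IsCohenMacaulayRing (R : Type*) [CommRing R] : Prop :=
  IsNoetherianRing R ∧
    ∀ (P : Ideal R) (_ : P.IsPrime), IsCohenMacaulayLocalRing (Localization.AtPrime P)

/-- The ring of invariants `R^G` of a subgroup `G ⊆ GL_n(A)` acting linearly on the
polynomial ring `R = A[X_1, …, X_n]` (fixing `A`), via the standard action of `GL_n(A)`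
on the `A`-span of `X_1, …, X_n`. -/
noncomputable def glInvariants {A : Type*} [CommRing A] {n : ℕ}
    (G : Subgroup (Matrix.GeneralLinearGroup (Fin n) A)) :
    Subalgebra A (MvPolynomial (Fin n) A) where
  carrier := {f | ∀ g ∈ G,
    MvPolynomial.aeval
      (fun i => ∑ j, ((g : Matrix (Fin n) (Fin n) A) i j) • MvPolynomial.X j) f = f}
  mul_mem' := by
    intro a b ha hb g hg
    rw [map_mul, ha g hg, hb g hg]
  add_mem' := by
    intro a b ha hb g hg
    rw [map_add, ha g hg, hb g hg]
  algebraMap_mem' := fun a g _ => MvPolynomial.aeval_C _ a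

section CM

open IsLocalRing Polynomial RingTheory.Sequence Pointwise

lemma cm_of_weak {R : Type*} [CommRing R] [IsLocalRing R] (rs : List R)
    (hdim : ringKrullDim R = rs.length) (hm : ∀ x ∈ rs, x ∈ maximalIdeal R)
    (hr : IsWeaklyRegular R rs) : IsCohenMacaulayLocalRing R :=
  ⟨rs.length, rs, hdim, rfl, hm, IsRegular.of_isWeaklyRegular_of_mem_maximalIdeal R hm hr⟩

lemma cm_of_flat {R S : Type*} [CommRing R] [CommRing S] [IsLocalRing R] [IsLocalRing S]
    [Algebra R S] [Module.Flat R S] [IsLocalHom (algebraMap R S)]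
    (h : IsCohenMacaulayLocalRing R) (hdim : ringKrullDim S = ringKrullDim R) :
    IsCohenMacaulayLocalRing S := by
  obtain ⟨n, rs, hd, hl, hm, hr⟩ := h
  refine cm_of_weak (rs.map (algebraMap R S)) ?_ ?_ hr.toIsWeaklyRegular.of_flat
  · rw [hdim, hd, List.length_map, hl]
  · intro x hx
    obtain ⟨y, hy, rfl⟩ := List.mem_map.mp hx
    have := hm y hy
    rw [mem_maximalIdeal, mem_nonunits_iff] at this ⊢
    exact fun hu => this (isUnit_of_map_unit _ _ hu)

lemma cm_of_ringEquiv {R S : Type*} [CommRing R] [CommRing S] [IsLocalRing R] [IsLocalRing S]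
    (e : R ≃+* S) (h : IsCohenMacaulayLocalRing R) : IsCohenMacaulayLocalRing S := by
  let : Algebra R S := e.toRingHom.toAlgebra
  have : Module.Flat R S := by
    let l : R ≃ₗ[R] S := LinearEquiv.ofBijective (Algebra.linearMap R S) e.bijective
    exact Module.Flat.of_linearEquiv l.symm
  have : IsLocalHom (algebraMap R S) := by
    change IsLocalHom e.toRingHom
    exact ⟨fun a ha => by simpa using ha⟩
  exact cm_of_flat h (ringKrullDim_eq_of_ringEquiv e).symm

lemma dim_atPrime {R : Type*} [CommRing R] (p : Ideal R) [p.IsPrime] :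
    ringKrullDim (Localization.AtPrime p) = p.height :=
  IsLocalization.AtPrime.ringKrullDim_eq_height p _

lemma cmRing_of_flat_integral {B S : Type*} [CommRing B] [CommRing S] [Algebra B S]
    [Module.Flat B S] [Module.Finite B S] (h : IsCohenMacaulayRing B) :
    IsCohenMacaulayRing S := by
  have : IsNoetherianRing B := h.1
  have : IsNoetherianRing S := IsNoetherianRing.of_finite B S
  refine ⟨inferInstance, fun P hP => ?_⟩
  let p := P.under B
  have : P.LiesOver p := ⟨rfl⟩
  have hh : P.height = p.height := by
    rw [Ideal.height_eq_height_add_of_liesOver_of_hasGoingDown p P]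
    have hle : p.map (algebraMap B S) ≤ P := Ideal.map_comap_le
    have : (P.map (Ideal.Quotient.mk <| p.map (algebraMap B S))).IsPrime :=
      Ideal.isPrime_map_quotientMk_of_isPrime hle
    have h0 : (P.map (Ideal.Quotient.mk <| p.map (algebraMap B S))).height = 0 := by
      rw [Ideal.height_eq_zero_iff]
      have hmin := Ideal.IsIntegral.mem_minimalPrimes_map_under (R := B) P
      refine ⟨⟨this, bot_le⟩, ?_⟩
      rintro Q ⟨hQ, -⟩ hQP
      have h1 : Q.comap (Ideal.Quotient.mk _) ≤ P := by
        refine (Ideal.comap_mono hQP).trans ?_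
        rw [Ideal.comap_map_of_surjective _ Ideal.Quotient.mk_surjective,
          ← RingHom.ker_eq_comap_bot, Ideal.mk_ker]
        exact sup_le le_rfl hle
      have h2 := hmin.2 ⟨hQ.comap _, by
        intro x hx
        rw [Ideal.mem_comap, Ideal.Quotient.eq_zero_iff_mem.mpr hx]
        exact Q.zero_mem⟩ h1
      exact Ideal.map_le_iff_le_comap.mpr h2
    rw [h0, add_zero]
  let : Algebra (Localization.AtPrime p) (Localization.AtPrime P) :=
    (Localization.localRingHom p P (algebraMap B S) rfl).toAlgebra
  have : IsLocalHom (algebraMap (Localization.AtPrime p) (Localization.AtPrime P)) :=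
    Localization.isLocalHom_localRingHom _ _ _ _
  have : IsScalarTower B (Localization.AtPrime p) (Localization.AtPrime P) := by
    refine IsScalarTower.of_algebraMap_eq fun x => ?_
    rw [RingHom.algebraMap_toAlgebra, Localization.localRingHom_to_map,
      ← IsScalarTower.algebraMap_apply]
  have : Module.Flat (Localization.AtPrime p) (Localization.AtPrime P) := by
    rw [Module.flat_iff_of_isLocalization (Localization.AtPrime p) p.primeCompl]
    exact Module.Flat.trans B S (Localization.AtPrime P)
  exact cm_of_flat (h.2 p inferInstance) (by rw [dim_atPrime, dim_atPrime, hh])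

lemma cm_poly_local {R : Type*} [CommRing R] [IsLocalRing R] [IsNoetherianRing R]
    (h : IsCohenMacaulayLocalRing R) (p : Ideal R[X]) [p.IsPrime]
    (max : p.comap C = maximalIdeal R) :
    IsCohenMacaulayLocalRing (Localization.AtPrime p) := by
  have : p.LiesOver (maximalIdeal R) := ⟨max.symm⟩
  by_cases eq : p = (maximalIdeal R).map C
  · have : IsLocalHom (algebraMap R (Localization.AtPrime p)) := by
      refine ⟨fun a ha => ?_⟩
      by_contra hna
      have h1 : C a ∈ p := by
        rw [← Ideal.mem_comap, max]; exact hna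
      rw [IsScalarTower.algebraMap_apply R R[X]] at ha
      exact (IsLocalization.AtPrime.isUnit_to_map_iff _ p _).mp ha h1
    have : Module.Flat R (Localization.AtPrime p) := Module.Flat.trans R R[X] _
    refine cm_of_flat h ?_
    rw [dim_atPrime, ← maximalIdeal_height_eq_ringKrullDim, eq, height_map_C]
  · obtain ⟨n, rs, hd, hl, hm, hr⟩ := h
    have : (Ideal.comap C p).IsMaximal := by simpa [max] using maximalIdeal.isMaximal R
    obtain ⟨y, hy, hyp⟩ := Polynomial.exists_monic_span_sup_map_eq R p this (by rwa [max])
    have hymem : y ∈ p := by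
      rw [hyp]; exact Ideal.mem_sup_right (Ideal.mem_span_singleton_self y)
    have hfin : Module.Finite R (R[X] ⧸ Ideal.span {y}) := hy.finite_quotient
    have hfree : Module.Free R (R[X] ⧸ Ideal.span {y}) := hy.free_quotient
    have hyle : Ideal.span {y} ≤ p := by rwa [Ideal.span_singleton_le_iff_mem]
    have hcm : (p.map (Ideal.Quotient.mk (Ideal.span {y}))).comap
        (Ideal.Quotient.mk (Ideal.span {y})) = p := by
      rw [Ideal.comap_map_of_surjective _ Ideal.Quotient.mk_surjective,
          ← RingHom.ker_eq_comap_bot, Ideal.mk_ker]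
      exact sup_eq_left.mpr hyle
    have : p.IsMaximal := by
      have hpr : (p.map (Ideal.Quotient.mk (Ideal.span {y}))).IsPrime :=
        Ideal.isPrime_map_quotientMk_of_isPrime hyle
      have hmx : (p.map (Ideal.Quotient.mk (Ideal.span {y}))).IsMaximal := by
        refine Ideal.isMaximal_of_isIntegral_of_isMaximal_comap (R := R) _ ?_
        rw [IsScalarTower.algebraMap_eq R R[X], ← Ideal.comap_comap,
          Ideal.Quotient.algebraMap_eq, hcm]
        exact this
      rw [← hcm]
      exact Ideal.comap_isMaximal_of_surjective _ Ideal.Quotient.mk_surjective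
    have hht : p.height = (maximalIdeal R).height + 1 := height_eq_height_add_one _ _
    have hreg : IsWeaklyRegular R[X] (y :: rs.map (algebraMap R R[X])) := by
      rw [isWeaklyRegular_cons_iff]
      refine ⟨hy.isRegular.left.isSMulRegular, ?_⟩
      have e : (y • (⊤ : Submodule R[X] R[X])) = Ideal.span {y} := by
        rw [← Submodule.ideal_span_singleton_smul]
        simp
      rw [(Submodule.quotEquivOfEq _ _ e).isWeaklyRegular_congr,
        isWeaklyRegular_map_algebraMap_iff, ← isWeaklyRegular_map_algebraMap_iff
        (S := R[X] ⧸ Ideal.span {y})]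
      exact hr.toIsWeaklyRegular.of_flat
    have hmem : ∀ x ∈ y :: rs.map (algebraMap R R[X]), x ∈ p := by
      intro x hx
      rcases List.mem_cons.mp hx with rfl | hx
      · exact hymem
      · obtain ⟨a, ha, rfl⟩ := List.mem_map.mp hx
        have := hm a ha
        rw [← max] at this
        exact this
    have := hreg.isRegular_of_isLocalization_of_mem (Localization.AtPrime p) p hmem
    refine ⟨n + 1, _, ?_, ?_, ?_, this⟩
    · rw [dim_atPrime, hht]
      push_cast
      rw [maximalIdeal_height_eq_ringKrullDim, hd]
    · simp [hl]
    · intro x hx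
      obtain ⟨a, ha, rfl⟩ := List.mem_map.mp hx
      rw [IsLocalization.AtPrime.to_map_mem_maximal_iff _ p]
      exact hmem a ha

lemma cmRing_poly {R : Type*} [CommRing R] (h : IsCohenMacaulayRing R) :
    IsCohenMacaulayRing R[X] := by
  have : IsNoetherianRing R := h.1
  refine ⟨inferInstance, fun p hp => ?_⟩
  let q := p.comap C
  let S := (Localization.AtPrime q)[X]
  let pc := Submonoid.map Polynomial.C.toMonoidHom q.primeCompl
  let : Algebra R[X] S := algebra R (Localization.AtPrime q)
  have : IsLocalization pc S := Polynomial.isLocalization _ _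
  let pS := p.map (algebraMap R[X] S)
  have disj : Disjoint (pc : Set R[X]) (p : Set R[X]) := by
    simpa [pc, q] using! Set.disjoint_image_left.mpr
      (Set.disjoint_compl_left_iff_subset.mpr (fun _ a ↦ a))
  have : pS.IsPrime := IsLocalization.isPrime_of_isPrime_disjoint pc _ _ ‹_› disj
  have : IsLocalization.AtPrime (Localization.AtPrime pS) p := by
    convert IsLocalization.isLocalization_isLocalization_atPrime_isLocalization pc
      (Localization.AtPrime pS) pS
    exact (IsLocalization.under_map_of_isPrime_disjoint pc _ ‹_› disj).symm
  have hq := h.2 q inferInstance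
  have eq : Ideal.comap C pS = maximalIdeal (Localization.AtPrime q) := by
    rw [← IsLocalization.map_under q.primeCompl _ (Ideal.comap C pS),
      ← IsLocalization.map_under q.primeCompl _ (maximalIdeal (Localization.AtPrime q))]
    simp only [Ideal.comap_comap, S, pS]
    rw [← Polynomial.algebraMap_eq (R := Localization.AtPrime q),
      ← IsScalarTower.algebraMap_eq R (Localization.AtPrime q) (Localization.AtPrime q)[X],
      IsScalarTower.algebraMap_eq R R[X] (Localization.AtPrime q)[X], ← Ideal.comap_comap,
      ← Ideal.under_def R[X], IsLocalization.under_map_of_isPrime_disjoint pc _ ‹_› disj]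
    simp [q, IsLocalization.AtPrime.under_maximalIdeal (Localization.AtPrime q) q]
  have := cm_poly_local hq pS eq
  exact cm_of_ringEquiv (IsLocalization.algEquiv p.primeCompl
    (Localization.AtPrime pS) (Localization.AtPrime p)).toRingEquiv this

lemma cmRing_of_ringEquiv {R S : Type*} [CommRing R] [CommRing S] (e : R ≃+* S)
    (h : IsCohenMacaulayRing R) : IsCohenMacaulayRing S := by
  let : Algebra R S := e.toRingHom.toAlgebra
  let l : R ≃ₗ[R] S := LinearEquiv.ofBijective (Algebra.linearMap R S) e.bijective
  have : Module.Flat R S := Module.Flat.of_linearEquiv l.symm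
  have : Module.Finite R S := Module.Finite.equiv l
  exact cmRing_of_flat_integral h

lemma cm_pid {R : Type*} [CommRing R] [IsDomain R] [IsLocalRing R] [IsPrincipalIdealRing R] :
    IsCohenMacaulayLocalRing R := by
  by_cases isf : IsField R
  · refine cm_of_weak [] ?_ (by simp) (by simp)
    let := isf.toField
    simp
  · obtain ⟨x, hx⟩ := IsPrincipalIdealRing.principal (maximalIdeal R)
    have hx0 : x ≠ 0 := by
      rintro rfl
      apply isf
      rw [isField_iff_maximalIdeal_eq, hx]
      simp
    refine cm_of_weak [x] ?_ ?_ ?_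
    · rw [IsPrincipalIdealRing.ringKrullDim_eq_one R isf]; simp
    · simp [hx]
    · rw [isWeaklyRegular_singleton_iff]
      exact (IsRegular.of_ne_zero hx0).left.isSMulRegular

lemma cmRing_dedekind {R : Type*} [CommRing R] [IsDedekindDomain R] : IsCohenMacaulayRing R := by
  refine ⟨inferInstance, fun p hp => ?_⟩
  by_cases eqbot : p = ⊥
  · have hf : IsField (Localization.AtPrime p) := by
      simp [isField_iff_maximalIdeal_eq, ← Localization.AtPrime.map_eq_maximalIdeal, eqbot]
    refine cm_of_weak [] ?_ (by simp) (by simp)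
    let := hf.toField
    simp
  · have := IsLocalization.AtPrime.isDiscreteValuationRing_of_dedekind_domain
      R eqbot (Localization.AtPrime p)
    exact cm_pid

lemma cmRing_mvPoly {R : Type*} [CommRing R] (h : IsCohenMacaulayRing R) (ι : Type*) [Finite ι] :
    IsCohenMacaulayRing (MvPolynomial ι R) := by
  induction ι using Finite.induction_empty_option with
  | of_equiv e H => exact cmRing_of_ringEquiv (MvPolynomial.renameEquiv _ e).toRingEquiv H
  | h_empty => exact cmRing_of_ringEquiv (MvPolynomial.isEmptyRingEquiv R _).symm h
  | h_option IH =>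
    exact cmRing_of_ringEquiv (MvPolynomial.optionEquivLeft _ _).toRingEquiv.symm (cmRing_poly IH)

end CM
section Veronese

open MvPolynomial

variable {A : Type*} [CommRing A]

/-- The component of a polynomial in the residue class `k` of exponents. -/
noncomputable def verProj (A : Type*) [CommRing A] (n k : ℕ) :
    MvPolynomial (Fin 2) A →ₗ[A] MvPolynomial (Fin 2) A :=
  (basisMonomials (Fin 2) A).constr A fun m =>
    if m 0 % n = k ∧ m 1 % n = (n - k) % n then
      monomial (m.mapRange (· / n) (Nat.zero_div n)) 1 else 0

/-- The exponent of the `k`-th basis element. -/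
noncomputable def verExp (n k : ℕ) : Fin 2 →₀ ℕ :=
  Finsupp.single 0 k + Finsupp.single 1 ((n - k) % n)

lemma verProj_monomial (n k : ℕ) (m : Fin 2 →₀ ℕ) (a : A) :
    verProj A n k (monomial m a) = if m 0 % n = k ∧ m 1 % n = (n - k) % n then
      monomial (m.mapRange (· / n) (Nat.zero_div n)) a else 0 := by
  have h1 : monomial m a = a • (basisMonomials (Fin 2) A m) := by
    simp [smul_monomial]
  rw [h1, map_smul, verProj, Module.Basis.constr_basis]
  split_ifs
  · simp [smul_monomial]
  · simp

lemma verProj_expand_mul (n k : ℕ) (hn : 0 < n) (g f : MvPolynomial (Fin 2) A) :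
    verProj A n k (expand n g * f) = g * verProj A n k f := by
  induction g using MvPolynomial.induction_on' with
  | add p q hp hq => simp only [map_add, add_mul, hp, hq]
  | monomial u a =>
    induction f using MvPolynomial.induction_on' with
    | add p q hp hq => simp only [map_add, mul_add, hp, hq]
    | monomial m b =>
      rw [expand_monomial, monomial_mul, verProj_monomial, verProj_monomial]
      have h0 : ∀ i, (n • u + m) i % n = m i % n := fun i => by simp
      simp only [h0]
      split_ifs
      · rw [monomial_mul]
        have hu : (n • u + m).mapRange (· / n) (Nat.zero_div n)
            = u + m.mapRange (· / n) (Nat.zero_div n) := by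
          ext i
          simp [Nat.mul_add_div hn]
        rw [hu]
      · simp

lemma ver_sum_monomial (n : ℕ) (hn : 0 < n) (m : Fin 2 →₀ ℕ) (a : A) (h : n ∣ m 0 + m 1) :
    ∑ k : Fin n, expand n (verProj A n k (monomial m a)) * monomial (verExp n k) 1
      = monomial m a := by
  have hk : m 0 % n < n := Nat.mod_lt _ hn
  rw [Finset.sum_eq_single (⟨m 0 % n, hk⟩ : Fin n)]
  · have h1 : m 1 % n = (n - m 0 % n) % n := by
      have h2 : (m 1) ≡ (n - m 0 % n) [MOD n] := by
        apply Nat.ModEq.add_left_cancel' (m 0)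
        have h3 : (m 0 + m 1) ≡ 0 [MOD n] := (Nat.modEq_zero_iff_dvd).mpr h
        refine h3.trans ?_
        have h4 : (m 0 % n + (n - m 0 % n)) ≡ 0 [MOD n] := by
          rw [Nat.add_sub_cancel' hk.le]
          exact (Nat.modEq_zero_iff_dvd).mpr dvd_rfl
        exact h4.symm.trans ((Nat.mod_modEq _ _).add_right _)
      exact h2
    rw [verProj_monomial, if_pos ⟨rfl, h1⟩, expand_monomial, monomial_mul, mul_one]
    have hu : n • m.mapRange (· / n) (Nat.zero_div n) + verExp n (m 0 % n) = m := by
      ext i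
      fin_cases i
      · simp [verExp, Nat.div_add_mod]
      · simp [verExp, ← h1, Nat.div_add_mod]
    exact congrArg (fun x => monomial x a) hu
  · intro k _ hne
    rw [verProj_monomial, if_neg]
    · simp
    · rintro ⟨h1, -⟩
      exact hne (Fin.ext h1.symm)
  · simp

lemma ver_sum (n : ℕ) (hn : 0 < n) (f : MvPolynomial (Fin 2) A)
    (h : ∀ m, coeff m f ≠ 0 → n ∣ m 0 + m 1) :
    ∑ k : Fin n, expand n (verProj A n k f) * monomial (verExp n k) 1 = f := by
  conv_rhs => rw [f.as_sum]
  conv_lhs => rw [f.as_sum]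
  simp only [map_sum, Finset.sum_mul]
  rw [Finset.sum_comm]
  refine Finset.sum_congr rfl fun m hm => ?_
  exact ver_sum_monomial n hn m _ (h m (mem_support_iff.mp hm))

lemma verExp_dvd (n k : ℕ) (hk : k < n) : n ∣ verExp n k 0 + verExp n k 1 := by
  simp only [verExp, Finsupp.add_apply, Finsupp.single_apply]
  simp only [if_true, one_ne_zero, zero_ne_one, if_false, add_zero, zero_add]
  apply Nat.dvd_of_mod_eq_zero
  rw [Nat.add_mod_mod, Nat.add_sub_cancel' hk.le, Nat.mod_self]

lemma expand_dvd (n : ℕ) (g : MvPolynomial (Fin 2) A) (m : Fin 2 →₀ ℕ)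
    (h : coeff m (expand n g) ≠ 0) : n ∣ m 0 + m 1 := by
  refine dvd_add ?_ ?_
  · by_contra h1
    exact h (coeff_expand_of_not_dvd _ h1)
  · by_contra h1
    exact h (coeff_expand_of_not_dvd _ h1)

lemma cmRing_veronese (hA : IsCohenMacaulayRing A) (n : ℕ) (hn : 0 < n)
    (S : Subalgebra A (MvPolynomial (Fin 2) A))
    (hS : ∀ f, f ∈ S ↔ ∀ m, coeff m f ≠ 0 → n ∣ m 0 + m 1) : IsCohenMacaulayRing S := by
  let ι : MvPolynomial (Fin 2) A →ₐ[A] S :=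
    (expand n).codRestrict S fun g => (hS _).mpr (expand_dvd n g)
  let : Algebra (MvPolynomial (Fin 2) A) S := ι.toRingHom.toAlgebra
  have hsmul : ∀ (g : MvPolynomial (Fin 2) A) (s : S), ((g • s : S) : MvPolynomial (Fin 2) A)
      = expand n g * s := fun g s => rfl
  let E : Fin n → S := fun k => ⟨monomial (verExp n k) 1, (hS _).mpr fun m hm => by
    classical
    rw [coeff_monomial] at hm
    have : verExp n k = m := by by_contra h; simp [h] at hm
    rw [← this]
    exact verExp_dvd n k k.2⟩
  let π : S →ₗ[MvPolynomial (Fin 2) A] (Fin n → MvPolynomial (Fin 2) A) :=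
    { toFun := fun s k => verProj A n k s
      map_add' := fun s t => by ext1 k; simp
      map_smul' := fun g s => by
        ext1 k
        simp only [hsmul, verProj_expand_mul n k hn]
        rfl }
  let τ : (Fin n → MvPolynomial (Fin 2) A) →ₗ[MvPolynomial (Fin 2) A] S :=
    Fintype.linearCombination _ E
  have hτ : τ ∘ₗ π = LinearMap.id := by
    ext1 s
    apply Subtype.ext
    have := ver_sum n hn (s : MvPolynomial (Fin 2) A) ((hS _).mp s.2)
    simp only [LinearMap.comp_apply, LinearMap.id_apply, τ, Fintype.linearCombination_apply]
    rw [AddSubmonoidClass.coe_finsetSum]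
    simp only [hsmul]
    exact this
  have : Module.Projective (MvPolynomial (Fin 2) A) S := Module.Projective.of_split π τ hτ
  have : Module.Finite (MvPolynomial (Fin 2) A) S :=
    Module.Finite.of_surjective τ fun s => ⟨π s, LinearMap.congr_fun hτ s⟩
  exact cmRing_of_flat_integral (cmRing_mvPoly hA (Fin 2))

lemma coeff_aeval_smul (c : A) (f : MvPolynomial (Fin 2) A) (m : Fin 2 →₀ ℕ) :
    coeff m (aeval (fun i => c • (X i : MvPolynomial (Fin 2) A)) f)
      = c ^ (m 0 + m 1) * coeff m f := by
  induction f using MvPolynomial.induction_on' with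
  | add p q hp hq => simp only [map_add, coeff_add, mul_add, hp, hq]
  | monomial u a =>
    have : aeval (fun i => c • (X i : MvPolynomial (Fin 2) A)) (monomial u a)
        = monomial u (c ^ (u 0 + u 1) * a) := by
      rw [aeval_monomial, Finsupp.prod_fintype _ _ (by simp), Fin.prod_univ_two, monomial_eq,
        Finsupp.prod_fintype _ _ (by simp), Fin.prod_univ_two, smul_pow, smul_pow]
      simp only [algebraMap_eq, smul_eq_C_mul, map_mul, map_pow]
      ring
    classical
    rw [this, coeff_monomial, coeff_monomial]
    split_ifs with h
    · rw [h]
    · simp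

end Veronese

section Scalar

lemma matrix_pow_of_sq_zero {L : Type*} [Field L] {M : Type*} [Ring M] [Algebra L M] (ε : L)
    (N : M) (h : N * N = 0) (k : ℕ) :
    (algebraMap L M ε + N) ^ (k + 1) = algebraMap L M (ε ^ (k + 1)) + ((k + 1 : L) * ε ^ k) • N := by
  induction k with
  | zero => simp
  | succ k ih =>
    generalize hc : ((k + 1 : L) * ε ^ k) = c at ih
    rw [pow_succ, ih, mul_add, add_mul, add_mul, smul_mul_assoc, smul_mul_assoc, h, smul_zero,
      add_zero, ← map_mul, ← pow_succ, ← Algebra.smul_def, add_assoc, ← Algebra.commutes,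
      ← Algebra.smul_def, smul_smul, ← add_smul, ← hc]
    congr 2
    push_cast
    ring

lemma scalar_of_finOrder {L : Type*} [Field L] [CharZero L] {M : Type*} [Ring M] [Algebra L M]
    [Nontrivial M] (ε : L) (T : M) (k : ℕ) (hk : T ^ (k + 1) = 1)
    (h : (T - algebraMap L M ε) * (T - algebraMap L M ε) = 0) : T = algebraMap L M ε := by
  set N := T - algebraMap L M ε with hN
  have hT : T = algebraMap L M ε + N := by rw [hN]; abel
  rw [hT, matrix_pow_of_sq_zero ε N h] at hk
  by_contra hne
  have hN0 : N ≠ 0 := fun h0 => hne (by rw [hT, h0, add_zero])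
  have h1 : (ε ^ (k + 1)) • N = N := by
    have := congrArg (· * N) hk
    simp only [add_mul, smul_mul_assoc, h, smul_zero, add_zero, one_mul] at this
    rwa [← Algebra.smul_def] at this
  have h2 : ε ^ (k + 1) = 1 := by
    have h3 : (ε ^ (k + 1) - 1) • N = 0 := by rw [sub_smul, h1, one_smul, sub_self]
    rcases smul_eq_zero.mp h3 with h4 | h4
    · exact sub_eq_zero.mp h4
    · exact absurd h4 hN0
  rw [h2, map_one] at hk
  have h5 : ((k + 1 : L) * ε ^ k) • N = 0 := by simpa using hk
  rcases smul_eq_zero.mp h5 with h6 | h6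
  · rcases mul_eq_zero.mp h6 with h7 | h7
    · exact Nat.cast_add_one_ne_zero k h7
    · rw [pow_succ, h7, zero_mul] at h2
      exact zero_ne_one h2
  · exact hN0 h6

end Scalar

open NumberField Polynomial in
/-- Let `A` be the ring of integers of a number field `K` and let `G = ⟨σ⟩ ⊆ GL_2(A)` be a
finite cyclic group acting linearly on `R = A[X, Y]` (fixing `A`). Let `ε₁, ε₂` be the
eigenvalues of `σ` in an algebraic closure of `K` (the roots of its characteristic
polynomial). If `ε₁ = ε₂` then `R^G` is Cohen–Macaulay. -/
theorem cyclic_equal_eigenvalues_invariants_cohenMacaulay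
    (K : Type) [Field K] [NumberField K]
    (σ : Matrix.GeneralLinearGroup (Fin 2) (𝓞 K)) (hσ : IsOfFinOrder σ)
    (ε₁ ε₂ : AlgebraicClosure K)
    (hchar : Matrix.charpoly
        ((σ : Matrix (Fin 2) (Fin 2) (𝓞 K)).map
          ⇑((algebraMap K (AlgebraicClosure K)).comp (algebraMap (𝓞 K) K)))
      = (X - C ε₁) * (X - C ε₂))
    (heq : ε₁ = ε₂) :
    IsCohenMacaulayRing ↥(glInvariants (Subgroup.zpowers σ)) := by
  classical
  subst heq
  set φ := (algebraMap K (AlgebraicClosure K)).comp (algebraMap (𝓞 K) K) with hφ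
  have hφi : Function.Injective φ :=
    (algebraMap K (AlgebraicClosure K)).injective.comp RingOfIntegers.coe_injective
  have hN := hσ.orderOf_pos
  obtain ⟨k, hk⟩ : ∃ k, orderOf σ = k + 1 := ⟨orderOf σ - 1, by omega⟩
  have hpow : (σ : Matrix (Fin 2) (Fin 2) (𝓞 K)) ^ (k + 1) = 1 := by
    rw [← Units.val_pow_eq_pow_val, ← hk, pow_orderOf_eq_one, Units.val_one]
  have hT : (σ : Matrix (Fin 2) (Fin 2) (𝓞 K)).map φ
      = algebraMap _ (Matrix (Fin 2) (Fin 2) (AlgebraicClosure K)) ε₁ := by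
    refine scalar_of_finOrder ε₁ _ k ?_ ?_
    · have := congrArg (RingHom.mapMatrix φ) hpow
      rw [map_pow, map_one] at this
      exact this
    · have := Matrix.aeval_self_charpoly ((σ : Matrix (Fin 2) (Fin 2) (𝓞 K)).map φ)
      rw [hchar] at this
      simpa using this
  have hent : ∀ i j, φ ((σ : Matrix (Fin 2) (Fin 2) (𝓞 K)) i j) = if i = j then ε₁ else 0 := by
    intro i j
    have := congrFun (congrFun hT i) j
    rw [Matrix.map_apply, Matrix.algebraMap_matrix_apply] at this
    exact this
  obtain ⟨e, he⟩ : ∃ e : 𝓞 K, (σ : Matrix (Fin 2) (Fin 2) (𝓞 K)) = algebraMap _ _ e := by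
    refine ⟨(σ : Matrix (Fin 2) (Fin 2) (𝓞 K)) 0 0, ?_⟩
    ext1 i j
    apply hφi
    rw [hent, Matrix.algebraMap_matrix_apply, apply_ite φ]
    simp [hent]
  have hek : e ^ (k + 1) = 1 := by
    rw [he, ← map_pow] at hpow
    have := congrFun (congrFun hpow 0) 0
    simpa [Matrix.algebraMap_matrix_apply] using this
  have hsum : ∀ (c : 𝓞 K) (g : Matrix (Fin 2) (Fin 2) (𝓞 K)), g = algebraMap _ _ c →
      (fun i => ∑ j, g i j • (MvPolynomial.X j : MvPolynomial (Fin 2) (𝓞 K)))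
        = fun i => c • MvPolynomial.X i := by
    rintro c g rfl
    funext i
    simp [Matrix.algebraMap_matrix_apply, ite_smul]
  have hpos : 0 < orderOf e :=
    (isOfFinOrder_iff_pow_eq_one.mpr ⟨k + 1, k.succ_pos, hek⟩).orderOf_pos
  refine cmRing_veronese cmRing_dedekind (orderOf e) hpos _ fun f => ⟨fun hf m hm => ?_,
    fun hf g hg => ?_⟩
  · have h1 := hf σ (Subgroup.mem_zpowers σ)
    rw [hsum e _ he] at h1
    have h2 := congrArg (MvPolynomial.coeff m) h1
    rw [coeff_aeval_smul] at h2
    exact orderOf_dvd_of_pow_eq_one (mul_eq_right₀ hm |>.mp h2)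
  · obtain ⟨j, rfl⟩ := (hσ.mem_powers_iff_mem_zpowers).mpr hg
    have h1 : ((σ ^ j : Matrix.GeneralLinearGroup (Fin 2) (𝓞 K)) : Matrix (Fin 2) (Fin 2) (𝓞 K))
        = algebraMap _ _ (e ^ j) := by
      rw [Units.val_pow_eq_pow_val, he, map_pow]
    change MvPolynomial.aeval (fun i => ∑ l, ((σ ^ j : Matrix.GeneralLinearGroup (Fin 2) (𝓞 K)) :
      Matrix (Fin 2) (Fin 2) (𝓞 K)) i l • MvPolynomial.X l) f = f
    rw [hsum _ _ h1]
    ext m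
    rw [coeff_aeval_smul]
    by_cases hm : MvPolynomial.coeff m f = 0
    · rw [hm, mul_zero]
    · obtain ⟨d, hd⟩ := hf m hm
      rw [← pow_mul, mul_comm j, hd, mul_assoc, pow_mul, pow_orderOf_eq_one, one_pow, one_mul]
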